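/- arXiv:math/0201140 — 2 statements merged into one kernel-verified Lean document; each statement's English description precedes it below -/
import Mathlib

section
/- For every n ≥ 3 and every integer k (with the convention D_{m,j}^* = 0 for j < 0): D_{n,k}^1 = (2k-1)·D_{n-1,k}^1 + 2(n-k)·D_{n-1,k-1}^1 + D_{n-1,k}^{0,1} + D_{n-1,k-1}^{≥2} + D_{n-1,k}^{0,≥2}. -/
/-- A signed permutation of `{1,…,n}`, encoded as an (unsigned) permutation of
`Fin n` together with a choice of sign for each position.  The associated
word is `π_1 π_2 ⋯ π_n` where `π_j = ± σ(j)`. -/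
abbrev SignedPerm (n : ℕ) := Equiv.Perm (Fin n) × (Fin n → Bool)

namespace SignedPerm

/-- The letter `π_j` of the word of `p`, for `1 ≤ j ≤ n` (and `0` otherwise). -/
def word {n : ℕ} (p : SignedPerm n) (j : ℕ) : ℤ :=
  if h : 1 ≤ j ∧ j ≤ n then
    (if p.2 ⟨j - 1, by omega⟩ then -1 else 1) * ((p.1 ⟨j - 1, by omega⟩ : ℕ) + 1)
  else 0

/-- The letter `π_j`, with the type `D` convention `π_0 = -π_2`. -/
def entry {n : ℕ} (p : SignedPerm n) (j : ℕ) : ℤ :=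
  if j = 0 then -(p.word 2) else p.word j

/-- The set of `D`-descents of `p`: those `i ∈ {0,…,n-1}` with `π_i > π_{i+1}`. -/
def ddes {n : ℕ} (p : SignedPerm n) : Finset ℕ :=
  (Finset.range n).filter fun i => p.entry (i + 1) < p.entry i

/-- The number of `D`-descents of `p`. -/
def d {n : ℕ} (p : SignedPerm n) : ℕ := p.ddes.card

/-- Membership in the type `D` Coxeter group `D_n ⊆ B_n`:
the number of negative letters is even. -/
def inD {n : ℕ} (p : SignedPerm n) : Prop :=
  Even (Finset.univ.filter (fun i => p.2 i = true)).card

/-- Type '1': descent at position `1` but not at `0`. -/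
def type1 {n : ℕ} (p : SignedPerm n) : Prop := 1 ∈ p.ddes ∧ 0 ∉ p.ddes

/-- Type '0,1': descents at both positions `0` and `1`. -/
def type01 {n : ℕ} (p : SignedPerm n) : Prop := 0 ∈ p.ddes ∧ 1 ∈ p.ddes

/-- Type '≥2': no descent at positions `0` and `1`. -/
def typeGe2 {n : ℕ} (p : SignedPerm n) : Prop := 0 ∉ p.ddes ∧ 1 ∉ p.ddes

/-- Type '0,≥2': descent at position `0` but not at `1`. -/
def type0Ge2 {n : ℕ} (p : SignedPerm n) : Prop := 0 ∈ p.ddes ∧ 1 ∉ p.ddes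

instance {n : ℕ} (p : SignedPerm n) : Decidable p.inD := by
  unfold SignedPerm.inD; infer_instance
instance {n : ℕ} (p : SignedPerm n) : Decidable p.type1 := by
  unfold SignedPerm.type1; infer_instance
instance {n : ℕ} (p : SignedPerm n) : Decidable p.type01 := by
  unfold SignedPerm.type01; infer_instance
instance {n : ℕ} (p : SignedPerm n) : Decidable p.typeGe2 := by
  unfold SignedPerm.typeGe2; infer_instance
instance {n : ℕ} (p : SignedPerm n) : Decidable p.type0Ge2 := by
  unfold SignedPerm.type0Ge2; infer_instance

end SignedPerm

/-- The type `D` Eulerian number `D_{n,k}`: the number of elements of `D_n`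
with exactly `k` `D`-descents (zero for `k < 0`). -/
def eulerD (n : ℕ) (k : ℤ) : ℕ :=
  (Finset.univ.filter fun p : SignedPerm n => p.inD ∧ (p.d : ℤ) = k).card

/-- The sub-Eulerian number `D_{n,k}^1`. -/
def subEuler1 (n : ℕ) (k : ℤ) : ℕ :=
  (Finset.univ.filter fun p : SignedPerm n => p.inD ∧ p.type1 ∧ (p.d : ℤ) = k).card

/-- The sub-Eulerian number `D_{n,k}^{0,1}`. -/
def subEuler01 (n : ℕ) (k : ℤ) : ℕ :=
  (Finset.univ.filter fun p : SignedPerm n => p.inD ∧ p.type01 ∧ (p.d : ℤ) = k).card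

/-- The sub-Eulerian number `D_{n,k}^{≥2}`. -/
def subEulerGe2 (n : ℕ) (k : ℤ) : ℕ :=
  (Finset.univ.filter fun p : SignedPerm n => p.inD ∧ p.typeGe2 ∧ (p.d : ℤ) = k).card

/-- The sub-Eulerian number `D_{n,k}^{0,≥2}`. -/
def subEuler0Ge2 (n : ℕ) (k : ℤ) : ℕ :=
  (Finset.univ.filter fun p : SignedPerm n => p.inD ∧ p.type0Ge2 ∧ (p.d : ℤ) = k).card

/-- The type `D` Eulerian polynomial `D_n(t) = Σ_{π ∈ D_n} t^{d(π)}`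
(with `D_0(t) = D_1(t) = 1`). -/
noncomputable def polyD (n : ℕ) : Polynomial ℚ :=
  ∑ p ∈ Finset.univ.filter (fun p : SignedPerm n => p.inD), Polynomial.X ^ p.d

/-- The sub-Eulerian polynomial `D_n^1(t)`. -/
noncomputable def polyD1 (n : ℕ) : Polynomial ℚ :=
  ∑ p ∈ Finset.univ.filter (fun p : SignedPerm n => p.inD ∧ p.type1), Polynomial.X ^ p.d

/-- The sub-Eulerian polynomial `D_n^{0,1}(t)`. -/
noncomputable def polyD01 (n : ℕ) : Polynomial ℚ :=
  ∑ p ∈ Finset.univ.filter (fun p : SignedPerm n => p.inD ∧ p.type01), Polynomial.X ^ p.d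

/-- The sub-Eulerian polynomial `D_n^{≥2}(t)`. -/
noncomputable def polyDGe2 (n : ℕ) : Polynomial ℚ :=
  ∑ p ∈ Finset.univ.filter (fun p : SignedPerm n => p.inD ∧ p.typeGe2), Polynomial.X ^ p.d

/-- The sub-Eulerian polynomial `D_n^{0,≥2}(t)`. -/
noncomputable def polyD0Ge2 (n : ℕ) : Polynomial ℚ :=
  ∑ p ∈ Finset.univ.filter (fun p : SignedPerm n => p.inD ∧ p.type0Ge2), Polynomial.X ^ p.d

namespace SignedPerm

lemma word_abs {n : ℕ} (p : SignedPerm n) (j : ℕ) (hj : j < n) :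
    p.word (j+1) = (if p.2 ⟨j, hj⟩ then -1 else 1) * ((p.1 ⟨j, hj⟩ : ℕ) + 1) := by
  unfold word
  rw [dif_pos ⟨by omega, by omega⟩]
  simp

/-- flip the sign of the letter of absolute value one -/
def flip {r : ℕ} (p : SignedPerm (r+2)) : SignedPerm (r+2) :=
  (p.1, Function.update p.2 (p.1.symm 0) (! p.2 (p.1.symm 0)))

lemma flip_flip {r : ℕ} (p : SignedPerm (r+2)) : p.flip.flip = p := by
  simp [flip]

lemma flip_word {r : ℕ} (p : SignedPerm (r+2)) (j : ℕ) :
    p.flip.word j = if |p.word j| = 1 then - p.word j else p.word j := by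
  by_cases h : 1 ≤ j ∧ j ≤ r+2
  · obtain ⟨i, rfl⟩ : ∃ i, j = i+1 := ⟨j-1, by omega⟩
    rw [word_abs _ _ (by omega), word_abs _ _ (by omega)]
    have hf1 : p.flip.1 = p.1 := rfl
    have hf2 : p.flip.2 = Function.update p.2 (p.1.symm 0) (! p.2 (p.1.symm 0)) := rfl
    rw [hf1]
    set a : Fin (r+2) := ⟨i, by omega⟩ with ha
    by_cases hi : a = p.1.symm 0
    · have : p.1 a = 0 := by simp [hi]
      have h3 : p.flip.2 a = ! p.2 a := by rw [hf2, ← hi]; simp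
      rw [this, h3]
      cases h2 : p.2 a <;> simp
    · have h0 : p.1 a ≠ 0 := fun h => hi (by simp [← h])
      have h1 : (p.1 a : ℕ) ≠ 0 := fun h => h0 (Fin.ext h)
      have h3 : p.flip.2 a = p.2 a := by rw [hf2, Function.update_of_ne hi]
      have h4 : ¬ |(if p.2 a then (-1 : ℤ) else 1) * ((p.1 a : ℕ) + 1)| = 1 := by
        split_ifs <;> simp only [one_mul, neg_mul, abs_neg] <;>
          rw [abs_of_nonneg (by positivity)] <;> omega
      rw [h3, if_neg h4]
  · simp [word, h]

lemma word_ne {n : ℕ} (p : SignedPerm n) (i j : ℕ) (hi : i < n) (hj : j < n) (hij : i ≠ j) :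
    |p.word (i+1)| ≠ |p.word (j+1)| := by
  rw [word_abs _ _ hi, word_abs _ _ hj]
  have h : (p.1 ⟨i, hi⟩ : ℕ) ≠ (p.1 ⟨j, hj⟩ : ℕ) := fun h => hij (by
    simpa using p.1.injective (Fin.ext h))
  split_ifs <;> simp only [one_mul, neg_mul, abs_neg] <;>
    rw [abs_of_nonneg (by positivity), abs_of_nonneg (by positivity)] <;> omega

lemma word_pos {n : ℕ} (p : SignedPerm n) (i : ℕ) (hi : i < n) :
    1 ≤ |p.word (i+1)| ∧ |p.word (i+1)| ≤ n := by
  rw [word_abs _ _ hi]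
  have := (p.1 ⟨i, hi⟩).2
  split_ifs <;> simp only [one_mul, neg_mul, abs_neg] <;>
    rw [abs_of_nonneg (by positivity)] <;> omega

lemma flip_ddes {r : ℕ} (p : SignedPerm (r+2)) : p.flip.ddes = p.ddes := by
  unfold ddes
  apply Finset.filter_congr
  intro i hi
  rw [Finset.mem_range] at hi
  rcases i with _ | i
  · have h1 := word_ne p 0 1 (by omega) (by omega) (by omega)
    have h2 := word_pos p 0 (by omega)
    have h3 := word_pos p 1 (by omega)
    simp only [entry, flip_word]
    simp only [zero_add, Nat.reduceAdd, one_ne_zero, if_true, if_false] at *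
    generalize p.word 1 = a at *
    generalize p.word 2 = b at *
    grind
  · have h1 := word_ne p i (i+1) (by omega) (by omega) (by omega)
    have h2 := word_pos p i (by omega)
    have h3 := word_pos p (i+1) (by omega)
    simp only [entry, flip_word]
    simp only [Nat.add_eq_zero_iff, one_ne_zero, and_false, if_false] at *
    generalize p.word (i+1) = a at *
    generalize p.word (i+1+1) = b at *
    grind

lemma flip_inD {r : ℕ} (p : SignedPerm (r+2)) : p.flip.inD ↔ ¬ p.inD := by
  unfold inD flip
  set a := p.1.symm 0
  simp only
  have key : ∀ f : Fin (r+2) → Bool, (Finset.univ.filter (fun i => f i = true)).card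
      = (if f a then 1 else 0) + ((Finset.univ.erase a).filter (fun i => f i = true)).card := by
    intro f
    rw [← Finset.insert_erase (Finset.mem_univ a), Finset.filter_insert]
    split_ifs <;> simp [add_comm]
  rw [key, key p.2]
  have : (Finset.univ.erase a).filter (fun i => Function.update p.2 a (!p.2 a) i = true)
      = (Finset.univ.erase a).filter (fun i => p.2 i = true) := by
    apply Finset.filter_congr
    intro i hi
    rw [Function.update_of_ne (Finset.ne_of_mem_erase hi)]
  rw [this]
  cases h : p.2 a <;> simp [Nat.even_add, add_comm 1, parity_simps]

lemma count_double {r : ℕ} (P : Finset ℕ → Prop) [DecidablePred P] :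
    (∑ p : SignedPerm (r+2), if P p.ddes then (1:ℤ) else 0) =
      2 * ((Finset.univ.filter fun p : SignedPerm (r+2) => p.inD ∧ P p.ddes).card : ℤ) := by
  have h : (Finset.univ.filter fun p : SignedPerm (r+2) => ¬ p.inD ∧ P p.ddes).card
      = (Finset.univ.filter fun p : SignedPerm (r+2) => p.inD ∧ P p.ddes).card := by
    apply Finset.card_nbij' flip flip
    · intro p hp; simpa [flip_inD, flip_ddes] using hp
    · intro p hp; simpa [flip_inD, flip_ddes] using hp
    · intro p _; exact flip_flip p
    · intro p _; exact flip_flip p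
  rw [Finset.sum_boole, two_mul]
  nth_rewrite 1 [← h]
  have := Finset.card_filter_add_card_filter_not
    (s := Finset.univ.filter fun p : SignedPerm (r+2) => P p.ddes) (fun p => ¬ p.inD)
  rw [Finset.filter_filter, Finset.filter_filter] at this
  simp only [not_not, and_comm (a := P _)] at this
  rw [← this]
  push_cast
  rfl

/-- insert the letter `±(m+1)` -/
def ins {m : ℕ} (x : (Fin (m+1) × Bool) × SignedPerm m) : SignedPerm (m+1) :=
  ((finSuccEquiv' x.1.1).trans ((Equiv.optionCongr x.2.1).trans
    (finSuccEquiv' (Fin.last m)).symm), x.1.1.insertNth x.1.2 x.2.2)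

lemma ins_same {m : ℕ} (i : Fin (m+1)) (s : Bool) (q : SignedPerm m) :
    (ins ((i, s), q)).1 i = Fin.last m ∧ (ins ((i, s), q)).2 i = s := by
  simp [ins]

lemma ins_above {m : ℕ} (i : Fin (m+1)) (s : Bool) (q : SignedPerm m) (j : Fin m) :
    (ins ((i, s), q)).1 (i.succAbove j) = Fin.castSucc (q.1 j) ∧
    (ins ((i, s), q)).2 (i.succAbove j) = q.2 j := by
  simp [ins]

lemma ins_bij (m : ℕ) : Function.Bijective (ins (m := m)) := by
  rw [Fintype.bijective_iff_injective_and_card]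
  constructor
  · rintro ⟨⟨i, s⟩, q⟩ ⟨⟨i', s'⟩, q'⟩ h
    have h1 := ins_same i s q
    rw [h] at h1
    have h2 := ins_same i' s' q'
    have hi : i = i' := (ins ((i', s'), q')).1.injective (h1.1.trans h2.1.symm)
    subst hi
    have hs : s = s' := h1.2.symm.trans h2.2
    subst hs
    have : q = q' := by
      refine Prod.ext (Equiv.ext fun j => ?_) (funext fun j => ?_)
      · have a := (ins_above i s q j).1
        rw [h, (ins_above i s q' j).1] at a
        exact (Fin.castSucc_injective _ a).symm
      · have a := (ins_above i s q j).2
        rw [h, (ins_above i s q' j).2] at a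
        exact a.symm
    rw [this]
  · simp [Fintype.card_perm, Nat.factorial_succ, pow_succ]
    ring

lemma ins_word_lt {m : ℕ} (i : Fin (m+1)) (s : Bool) (q : SignedPerm m) (j : ℕ) (hj : j ≤ i) :
    (ins ((i, s), q)).word j = q.word j := by
  rcases j with _ | j
  · simp [word]
  have hi := i.2
  have hm : j < m := by omega
  rw [word_abs _ _ (by omega), word_abs _ _ hm]
  have e : (⟨j, by omega⟩ : Fin (m+1)) = i.succAbove ⟨j, hm⟩ := by
    rw [Fin.succAbove_of_castSucc_lt]
    · rfl
    · rw [Fin.lt_def]; simpa using hj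
  rw [e, (ins_above i s q _).1, (ins_above i s q _).2]
  simp

lemma ins_word_eq {m : ℕ} (i : Fin (m+1)) (s : Bool) (q : SignedPerm m) :
    (ins ((i, s), q)).word (i+1) = (if s then -1 else 1) * (m + 1) := by
  rw [word_abs _ _ i.2, (ins_same i s q).1, (ins_same i s q).2]
  simp

lemma ins_word_gt {m : ℕ} (i : Fin (m+1)) (s : Bool) (q : SignedPerm m) (j : ℕ)
    (hj : i < j) (hm : j ≤ m) :
    (ins ((i, s), q)).word (j+1) = q.word j := by
  obtain ⟨j, rfl⟩ : ∃ a, j = a+1 := ⟨j-1, by omega⟩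
  rw [word_abs _ _ (by omega), word_abs _ _ (by omega)]
  have e : (⟨j+1, by omega⟩ : Fin (m+1)) = i.succAbove ⟨j, by omega⟩ := by
    rw [Fin.succAbove_of_le_castSucc]
    · rfl
    · rw [Fin.le_def]; simp; omega
  rw [e, (ins_above i s q _).1, (ins_above i s q _).2]
  simp

/-- descent indicator in the tail -/
def b {n : ℕ} (p : SignedPerm n) (j : ℕ) : ℤ := if p.word (j+3) < p.word (j+2) then 1 else 0

lemma mem0 {r : ℕ} (p : SignedPerm (r+2)) : 0 ∈ p.ddes ↔ p.word 1 < - p.word 2 := by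
  simp [ddes, entry]
lemma mem1 {r : ℕ} (p : SignedPerm (r+2)) : 1 ∈ p.ddes ↔ p.word 2 < p.word 1 := by
  simp [ddes, entry]

lemma d_eq {r : ℕ} (p : SignedPerm (r+2)) : (p.d : ℤ) =
    (if 0 ∈ p.ddes then 1 else 0) + (if 1 ∈ p.ddes then 1 else 0)
      + ∑ j ∈ Finset.range r, p.b j := by
  simp only [mem0, mem1]
  unfold d ddes
  rw [Finset.card_filter, Finset.sum_range_succ', Finset.sum_range_succ']
  push_cast
  simp only [entry, b]
  simp only [Nat.add_eq_zero_iff, one_ne_zero, and_false, if_false]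
  simp
  ring

lemma b_zero_one {n : ℕ} (p : SignedPerm n) (j : ℕ) : p.b j = 0 ∨ p.b j = 1 := by
  unfold b; split_ifs <;> simp

/-- middle insertion -/
lemma ins_sum_mid {r : ℕ} (q : SignedPerm (r+2)) (s : Bool) (t : ℕ) (ht : t < r) :
    ∑ j ∈ Finset.range (r+1), (ins ((⟨t+2, by omega⟩, s), q)).b j
      = ∑ j ∈ Finset.range r, q.b j - q.b t + 1 := by
  obtain ⟨u, rfl⟩ : ∃ u, r = t + 1 + u := ⟨r - (t+1), by omega⟩
  rw [show t + 1 + u + 1 = t + 2 + u by ring, Finset.sum_range_add, Finset.sum_range_add _ (t+1),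
    Finset.sum_range_succ, Finset.sum_range_succ, Finset.sum_range_succ]
  set i : Fin (t+1+u+2+1) := ⟨t+2, by omega⟩ with hi
  have h1 : ∀ j ∈ Finset.range t, (ins ((i, s), q)).b j = q.b j := by
    intro j hj
    rw [Finset.mem_range] at hj
    unfold b
    rw [ins_word_lt i s q (j+3) (by simp only [hi]; omega), ins_word_lt i s q (j+2) (by simp only [hi]; omega)]
  have h2 : ∀ j ∈ Finset.range u, (ins ((i, s), q)).b (t+2+j) = q.b (t+1+j) := by
    intro j hj
    rw [Finset.mem_range] at hj
    unfold b
    rw [ins_word_gt i s q (t+2+j+2) (by simp only [hi]; omega) (by omega),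
      ins_word_gt i s q (t+2+j+1) (by simp only [hi]; omega) (by omega)]
    congr! 3 <;> ring
  rw [Finset.sum_congr rfl h1, Finset.sum_congr rfl h2]
  have h3 : (ins ((i, s), q)).b t + (ins ((i, s), q)).b (t+1) = 1 := by
    unfold b
    rw [ins_word_lt i s q (t+2) (by simp [hi]), ins_word_eq i s q,
      ins_word_gt i s q (t+3) (by simp [hi]) (by omega)]
    have a1 := word_pos q (t+1) (by omega)
    have a2 := word_pos q (t+2) (by omega)
    rw [abs_le] at a1 a2
    push_cast at *
    cases s <;> simp <;> grind
  linarith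

lemma ins_sum_last {r : ℕ} (q : SignedPerm (r+2)) (s : Bool) :
    ∑ j ∈ Finset.range (r+1), (ins ((⟨r+2, by omega⟩, s), q)).b j
      = ∑ j ∈ Finset.range r, q.b j + if s then 1 else 0 := by
  rw [Finset.sum_range_succ]
  set i : Fin (r+2+1) := ⟨r+2, by omega⟩ with hi
  have h1 : ∀ j ∈ Finset.range r, (ins ((i, s), q)).b j = q.b j := by
    intro j hj
    rw [Finset.mem_range] at hj
    unfold b
    rw [ins_word_lt i s q (j+3) (by simp only [hi]; omega), ins_word_lt i s q (j+2) (by simp only [hi]; omega)]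
  rw [Finset.sum_congr rfl h1]
  congr 1
  unfold b
  rw [ins_word_lt i s q (r+2) (by simp [hi]), ins_word_eq i s q]
  have a1 := word_pos q (r+1) (by omega)
  rw [abs_le] at a1
  push_cast at *
  cases s <;> simp <;> grind

lemma ins_sum_zero {r : ℕ} (q : SignedPerm (r+2)) (s : Bool) :
    ∑ j ∈ Finset.range (r+1), (ins ((0, s), q)).b j
      = ∑ j ∈ Finset.range r, q.b j + if 1 ∈ q.ddes then 1 else 0 := by
  simp only [mem1]
  rw [Finset.sum_range_succ']
  have h1 : ∀ j ∈ Finset.range r, (ins ((0, s), q)).b (j+1) = q.b j := by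
    intro j hj
    rw [Finset.mem_range] at hj
    unfold b
    rw [ins_word_gt 0 s q (j+3) (by simp) (by omega), ins_word_gt 0 s q (j+2) (by simp) (by omega)]
  rw [Finset.sum_congr rfl h1]
  congr 1
  unfold b
  rw [ins_word_gt 0 s q 2 (by simp) (by omega), ins_word_gt 0 s q 1 (by simp) (by omega)]

lemma ins_mem_ge {r : ℕ} (q : SignedPerm (r+2)) (s : Bool) (t : ℕ) (ht : t < r+1) :
    (0 ∈ (ins ((⟨t+2, by omega⟩, s), q)).ddes ↔ 0 ∈ q.ddes) ∧
    (1 ∈ (ins ((⟨t+2, by omega⟩, s), q)).ddes ↔ 1 ∈ q.ddes) := by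
  rw [mem0, mem0, mem1, mem1, ins_word_lt _ s q 1 (by simp), ins_word_lt _ s q 2 (by simp)]
  simp

lemma ins_mem_one {r : ℕ} (q : SignedPerm (r+2)) (s : Bool) :
    ¬ (ins ((1, s), q)).type1 := by
  unfold type1
  rw [mem0, mem1]
  have h1 := ins_word_eq 1 s q
  have h2 := ins_word_lt 1 s q 1 (by simp)
  simp only [Fin.val_one, Nat.reduceAdd] at h1
  rw [h1, h2]
  have a1 := word_pos q 0 (by omega)
  rw [abs_le] at a1
  push_cast at *
  cases s <;> simp at * <;> omega

lemma ins_mem_zero {r : ℕ} (q : SignedPerm (r+2)) (s : Bool) :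
    (1 ∈ (ins ((0, s), q)).ddes ↔ s = false) ∧ (0 ∈ (ins ((0, s), q)).ddes ↔ s = true) := by
  rw [mem0, mem1]
  have h1 := ins_word_eq 0 s q
  have h2 := ins_word_gt 0 s q 1 (by simp) (by omega)
  simp only [Fin.val_zero, Nat.reduceAdd] at h1 h2
  rw [h1, h2]
  have a1 := word_pos q 0 (by omega)
  rw [abs_le] at a1
  push_cast at *
  cases s <;> simp at * <;> omega

lemma per_q {r : ℕ} (q : SignedPerm (r+2)) (k : ℤ) :
    (∑ x : Fin (r+3) × Bool, if (ins (x, q)).type1 ∧ ((ins (x, q)).d : ℤ) = k then (1:ℤ) else 0) =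
      (2 * k - 1) * (if q.type1 ∧ (q.d : ℤ) = k then 1 else 0)
      + 2 * ((r + 3 : ℤ) - k) * (if q.type1 ∧ (q.d : ℤ) = k - 1 then 1 else 0)
      + (if q.type01 ∧ (q.d : ℤ) = k then 1 else 0)
      + (if q.typeGe2 ∧ (q.d : ℤ) = k - 1 then 1 else 0)
      + (if q.type0Ge2 ∧ (q.d : ℤ) = k then 1 else 0) := by
  rw [Fintype.sum_prod_type]
  simp only [Fintype.sum_bool]
  rw [Fin.sum_univ_succ, Fin.sum_univ_succ, Fin.sum_univ_castSucc]
  set S := ∑ j ∈ Finset.range r, q.b j with hS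
  have hmid : ∀ t : Fin r, ∀ s, (if (ins ((t.castSucc.succ.succ, s), q)).type1 ∧
      ((ins ((t.castSucc.succ.succ, s), q)).d : ℤ) = k then (1:ℤ) else 0) =
      q.b t * (if q.type1 ∧ (q.d : ℤ) = k then 1 else 0) +
      (1 - q.b t) * (if q.type1 ∧ (q.d : ℤ) = k - 1 then 1 else 0) := by
    intro t s
    have e : t.castSucc.succ.succ = (⟨t+2, by omega⟩ : Fin (r+3)) := rfl
    have h := ins_mem_ge q s t (by omega)
    simp only [e, d_eq, ins_sum_mid q s t t.2, type1, h.1, h.2]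
    rcases b_zero_one q t with h0 | h0 <;> rw [h0] <;> grind
  have hlast : ∀ s, (if (ins (((Fin.last r).succ.succ, s), q)).type1 ∧
      ((ins (((Fin.last r).succ.succ, s), q)).d : ℤ) = k then (1:ℤ) else 0) =
      if q.type1 ∧ (q.d : ℤ) = k - (if s then 1 else 0) then 1 else 0 := by
    intro s
    have e : (Fin.last r).succ.succ = (⟨r+2, by omega⟩ : Fin (r+3)) := rfl
    have h := ins_mem_ge q s r (by omega)
    simp only [e, d_eq, ins_sum_last q s, type1, h.1, h.2]
    grind
  have hone : ∀ s, ¬ (ins ((Fin.succ 0, s), q)).type1 := fun s => ins_mem_one q s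
  have hz : ∀ s, ((ins ((0, s), q)).type1 ∧
      ((ins ((0, s), q)).d : ℤ) = k) ↔ s = false ∧ 1 + S + (if 1 ∈ q.ddes then 1 else 0) = k := by
    intro s
    have h := ins_mem_zero q s
    simp only [d_eq, ins_sum_zero, type1, h.1, h.2]
    cases s <;> simp [hS, add_assoc]
  simp only [hmid, hlast, hone, hz, false_and, if_false]
  simp only [← two_mul]
  rw [← Finset.mul_sum, Finset.sum_add_distrib, ← Finset.sum_mul, ← Finset.sum_mul,
    Finset.sum_sub_distrib, Fin.sum_univ_eq_sum_range (fun j => q.b j), ← hS]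
  simp only [d_eq, ← hS, type1, type01, typeGe2, type0Ge2]
  simp
  clear hmid hlast hone hz
  clear_value S
  by_cases h0 : 0 ∈ q.ddes <;> by_cases h1 : 1 ∈ q.ddes <;> simp [h0, h1] <;> grind

end SignedPerm


/-- **Proposition 3.2 (i).** Recurrence for the sub-Eulerian numbers `D_{n,k}^1`. -/
theorem subEuler1_recurrence (n : ℕ) (hn : 3 ≤ n) (k : ℤ) :
    (subEuler1 n k : ℤ) =
      (2 * k - 1) * subEuler1 (n - 1) k + 2 * ((n : ℤ) - k) * subEuler1 (n - 1) (k - 1)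
        + subEuler01 (n - 1) k + subEulerGe2 (n - 1) (k - 1) + subEuler0Ge2 (n - 1) k := by
  obtain ⟨r, rfl⟩ : ∃ r, n = r + 3 := ⟨n - 3, by omega⟩
  have e : r + 3 - 1 = r + 2 := rfl
  rw [e]
  have c1 : ∀ (m : ℕ) (k : ℤ), (∑ p : SignedPerm (m+2),
      if p.type1 ∧ (p.d : ℤ) = k then (1:ℤ) else 0) = 2 * (subEuler1 (m+2) k : ℤ) := fun m k =>
    SignedPerm.count_double (fun s => (1 ∈ s ∧ 0 ∉ s) ∧ (s.card : ℤ) = k)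
  have c2 : ∀ (m : ℕ) (k : ℤ), (∑ p : SignedPerm (m+2),
      if p.type01 ∧ (p.d : ℤ) = k then (1:ℤ) else 0) = 2 * (subEuler01 (m+2) k : ℤ) := fun m k =>
    SignedPerm.count_double (fun s => (0 ∈ s ∧ 1 ∈ s) ∧ (s.card : ℤ) = k)
  have c3 : ∀ (m : ℕ) (k : ℤ), (∑ p : SignedPerm (m+2),
      if p.typeGe2 ∧ (p.d : ℤ) = k then (1:ℤ) else 0) = 2 * (subEulerGe2 (m+2) k : ℤ) := fun m k =>
    SignedPerm.count_double (fun s => (0 ∉ s ∧ 1 ∉ s) ∧ (s.card : ℤ) = k)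
  have c4 : ∀ (m : ℕ) (k : ℤ), (∑ p : SignedPerm (m+2),
      if p.type0Ge2 ∧ (p.d : ℤ) = k then (1:ℤ) else 0) = 2 * (subEuler0Ge2 (m+2) k : ℤ) := fun m k =>
    SignedPerm.count_double (fun s => (0 ∈ s ∧ 1 ∉ s) ∧ (s.card : ℤ) = k)
  have key := c1 (r+1) k
  rw [← (SignedPerm.ins_bij (r+2)).sum_comp, Fintype.sum_prod_type_right] at key
  simp only [SignedPerm.per_q, Finset.sum_add_distrib, ← Finset.mul_sum, c1, c2, c3, c4] at key
  push_cast
  have e2 : r + 1 + 2 = r + 3 := rfl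
  rw [e2] at key
  linarith
end

section
/- For every n ≥ 2, the following identity holds in the ring ℚ⟦t⟧ of formal power series in t: D_n^{0,≥2}(t) = t·(1-t)^{n-1}·Σ_{k≥0} (2^{n-1}·((k+1)^n + k^n) - (2k+1)^n)·t^k, and the same identity holds with D_n^{0,≥2}(t) replaced by D_n^1(t). -/
open Finset in
/-- chains -/
def chains (n : ℕ) (b : Fin (n+1) → ℤ) (k : ℕ) : Finset (Fin (n+1) → ℕ) :=
  (Fintype.piFinset (fun _ => Finset.range (k+1))).filter
    (fun c => c 0 = 0 ∧ ∀ i : Fin n, c i.castSucc + (if b i.succ < b i.castSucc then 1 else 0) ≤ c i.succ)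

def desN {n : ℕ} (b : Fin (n+1) → ℤ) : ℕ :=
  ∑ i : Fin n, if b i.succ < b i.castSucc then 1 else 0

theorem chains_mono {n : ℕ} {b : Fin (n+1) → ℤ} {c : Fin (n+1) → ℕ}
    (h : ∀ i : Fin n, c i.castSucc + (if b i.succ < b i.castSucc then 1 else 0) ≤ c i.succ) :
    Monotone c := by
  rw [Fin.monotone_iff_le_succ]
  intro i
  exact le_trans (Nat.le_add_right _ _) (h i)

theorem mem_chains {n : ℕ} {b : Fin (n+1) → ℤ} {k : ℕ} {c : Fin (n+1) → ℕ} :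
    c ∈ chains n b k ↔ c (Fin.last n) ≤ k ∧ c 0 = 0 ∧
      ∀ i : Fin n, c i.castSucc + (if b i.succ < b i.castSucc then 1 else 0) ≤ c i.succ := by
  unfold chains
  simp only [Finset.mem_filter, Fintype.mem_piFinset, Finset.mem_range]
  constructor
  · rintro ⟨h1, h2, h3⟩
    exact ⟨by have := h1 (Fin.last n); omega, h2, h3⟩
  · rintro ⟨h1, h2, h3⟩
    refine ⟨fun i => ?_, h2, h3⟩
    have := chains_mono h3 (Fin.le_last i)
    omega

theorem chains_succ_fiber {n : ℕ} (b : Fin (n+2) → ℤ) (k j : ℕ) (hj : j ≤ k) :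
    ((chains (n+1) b k).filter (fun c => c (Fin.last (n+1)) = j)).card =
      if (if b (Fin.last (n+1)) < b (Fin.last n).castSucc then 1 else 0) ≤ j then
        (chains n (Fin.init b) (j - (if b (Fin.last (n+1)) < b (Fin.last n).castSucc then 1 else 0))).card
      else 0 := by
  set δ := (if b (Fin.last (n+1)) < b (Fin.last n).castSucc then 1 else 0) with hδ
  split_ifs with h
  · refine Finset.card_nbij' (fun c => Fin.init c) (fun c => Fin.snoc c j) ?_ ?_ ?_ ?_
    · intro c hc
      simp only [Finset.coe_filter, Set.mem_ofPred_eq, mem_chains] at hc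
      obtain ⟨⟨h1, h2, h3⟩, h4⟩ := hc
      simp only [Finset.mem_coe, mem_chains]
      refine ⟨?_, ?_, ?_⟩
      · have := h3 (Fin.last n)
        rw [Fin.succ_last, ← hδ, h4] at this
        simp only [Fin.init]
        omega
      · simpa [Fin.init] using h2
      · intro i
        have := h3 i.castSucc
        exact this
    · intro c hc
      simp only [Finset.mem_coe, mem_chains] at hc
      obtain ⟨h1, h2, h3⟩ := hc
      simp only [Finset.coe_filter, Set.mem_ofPred_eq, mem_chains]
      refine ⟨⟨?_, ?_, ?_⟩, ?_⟩
      · simpa using hj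
      · rw [← Fin.castSucc_zero, Fin.snoc_castSucc]; exact h2
      · intro i
        refine Fin.lastCases ?_ (fun i => ?_) i
        · rw [Fin.succ_last, ← hδ, Fin.snoc_castSucc, Fin.snoc_last]
          omega
        · have := h3 i
          rw [Fin.succ_castSucc, Fin.snoc_castSucc, Fin.snoc_castSucc]
          exact this
      · simp
    · intro c hc
      simp only [Finset.coe_filter, Set.mem_ofPred_eq] at hc
      simp [← hc.2]
    · intro c hc
      simp
  · rw [Finset.card_eq_zero, Finset.filter_eq_empty_iff]
    intro c hc h4
    rw [mem_chains] at hc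
    have := hc.2.2 (Fin.last n)
    rw [Fin.succ_last, ← hδ, h4] at this
    omega

theorem chains_succ {n : ℕ} (b : Fin (n+2) → ℤ) (k : ℕ) :
    (chains (n+1) b k).card = ∑ j ∈ Finset.range (k+1),
      if (if b (Fin.last (n+1)) < b (Fin.last n).castSucc then 1 else 0) ≤ j then
        (chains n (Fin.init b) (j - (if b (Fin.last (n+1)) < b (Fin.last n).castSucc then 1 else 0))).card
      else 0 := by
  rw [Finset.card_eq_sum_card_fiberwise (f := fun c => c (Fin.last (n+1))) (t := Finset.range (k+1))]
  · refine Finset.sum_congr rfl fun j hj => ?_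
    rw [Finset.mem_range] at hj
    exact chains_succ_fiber b k j (by omega)
  · intro c hc
    simp only [Finset.mem_coe, mem_chains] at hc
    simp only [Finset.coe_range, Set.mem_Iio]
    omega

open PowerSeries in
theorem one_sub_mul_mk_sum (f : ℕ → ℚ) :
    (1 - X : PowerSeries ℚ) * PowerSeries.mk (fun k => ∑ j ∈ Finset.range (k+1), f j) =
      PowerSeries.mk f := by
  ext k
  rw [sub_mul, one_mul, map_sub, coeff_mk, coeff_mk]
  cases k with
  | zero => simp
  | succ k => rw [coeff_succ_X_mul, coeff_mk, Finset.sum_range_succ]; ring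

open PowerSeries in
theorem chains_gf (n : ℕ) (b : Fin (n+1) → ℤ) :
    (1 - X : PowerSeries ℚ) ^ (n+1) * PowerSeries.mk (fun k => ((chains n b k).card : ℚ)) =
      X ^ desN b := by
  induction n with
  | zero =>
    have : ∀ k, (chains 0 b k).card = 1 := by
      intro k
      rw [Finset.card_eq_one]
      refine ⟨fun _ => 0, ?_⟩
      ext c
      rw [mem_chains, Finset.mem_singleton]
      constructor
      · rintro ⟨_, h, _⟩
        funext i
        rw [Fin.fin_one_eq_zero i, h]
      · rintro rfl
        simp
    simp only [this, desN]
    simp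
    rw [mul_comm]
    exact PowerSeries.mk_one_mul_one_sub_eq_one ℚ
  | succ n ih =>
    have h1 : PowerSeries.mk (fun k => ((chains (n+1) b k).card : ℚ)) =
      PowerSeries.mk (fun k => ∑ j ∈ Finset.range (k+1), (fun j =>
       ((if (if b (Fin.last (n+1)) < b (Fin.last n).castSucc then 1 else 0) ≤ j then
        (chains n (Fin.init b) (j - (if b (Fin.last (n+1)) < b (Fin.last n).castSucc then 1 else 0))).card
      else 0 : ℕ) : ℚ)) j) := by
      congr 1; funext k; rw [chains_succ]; push_cast; rfl
    rw [pow_succ, mul_assoc, h1, one_sub_mul_mk_sum]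
    have hd : desN b = desN (Fin.init b) +
      (if b (Fin.last (n+1)) < b (Fin.last n).castSucc then 1 else 0) := by
      unfold desN
      rw [Fin.sum_univ_castSucc]
      rfl
    rw [hd, pow_add X, ← ih (Fin.init b), mul_assoc]
    congr 1
    ext k
    rw [coeff_mul_X_pow', coeff_mk]
    split_ifs <;> simp

theorem lex_le_iff (x y : ℕ) (b c : ℤ) :
    (toLex (x, b) ≤ toLex (y, c)) ↔ x + (if c < b then 1 else 0) ≤ y := by
  rw [Prod.Lex.toLex_le_toLex]
  split_ifs <;> simp <;> omega

theorem fiber_card {n : ℕ} (a : Fin n → ℤ) (ha : Function.Injective a) (b0 : ℤ) (k : ℕ)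
    (σ : Equiv.Perm (Fin n)) :
    ((Fintype.piFinset (fun v => if b0 ≤ a v then Finset.Icc 0 k else Finset.Icc 1 k)).filter
      (fun f => Tuple.sort (fun v => toLex (f v, a v)) = σ)).card =
    (chains n (Fin.cons b0 (a ∘ σ)) k).card := by
  have key : ∀ f : Fin n → ℕ, 
      (f ∈ (Fintype.piFinset (fun v => if b0 ≤ a v then Finset.Icc 0 k else Finset.Icc 1 k)).filter
      (fun f => Tuple.sort (fun v => toLex (f v, a v)) = σ)) ↔
      (Fin.cons 0 (f ∘ σ) : Fin (n+1) → ℕ) ∈ chains n (Fin.cons b0 (a ∘ σ)) k := by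
    intro f
    rw [mem_chains, Finset.mem_filter]
    have h1 : Tuple.sort (fun v => toLex (f v, a v)) = σ ↔
        Monotone ((fun v => toLex (f v, a v)) ∘ σ) := by
      rw [eq_comm, Tuple.eq_sort_iff]
      refine ⟨fun h => h.1, fun h => ⟨h, fun i j hij he => ?_⟩⟩
      have he' : a (σ i) = a (σ j) := by
        have := congrArg (fun z => (ofLex z).2) he
        simpa using this
      exact absurd (σ.injective (ha he')) hij.ne
    set G : Fin (n+1) → ℕ ×ₗ ℤ := fun i => toLex ((Fin.cons 0 (f ∘ σ) : Fin (n+1) → ℕ) i,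
      (Fin.cons b0 (a ∘ σ) : Fin (n+1) → ℤ) i) with hG
    have h2 : (∀ i : Fin n, (Fin.cons 0 (f ∘ σ) : Fin (n+1) → ℕ) i.castSucc +
        (if (Fin.cons b0 (a ∘ σ) : Fin (n+1) → ℤ) i.succ <
          (Fin.cons b0 (a ∘ σ) : Fin (n+1) → ℤ) i.castSucc then 1 else 0) ≤
          (Fin.cons 0 (f ∘ σ) : Fin (n+1) → ℕ) i.succ) ↔ Monotone G := by
      rw [Fin.monotone_iff_le_succ]
      refine forall_congr' fun i => ?_
      rw [hG]
      exact (lex_le_iff _ _ _ _).symm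
    rw [h1, h2]
    have h3 : Monotone G ↔ Monotone ((fun v => toLex (f v, a v)) ∘ σ) ∧
        ∀ v, toLex (0, b0) ≤ toLex (f v, a v) := by
      constructor
      · intro h
        refine ⟨fun i j hij => ?_, fun v => ?_⟩
        · have := h (Fin.succ_le_succ_iff.mpr hij)
          simpa [hG] using this
        · have := h (Fin.zero_le (σ.symm v).succ)
          simpa [hG] using this
      · rintro ⟨h, h'⟩ i j
        refine Fin.cases ?_ (fun i => ?_) i <;> refine Fin.cases ?_ (fun j => ?_) j
        · intro _; exact le_rfl
        · intro _
          simpa [hG] using h' (σ j)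
        · intro hh; exact absurd hh (by simp [Fin.le_def])
        · intro hh
          have := h (Fin.succ_le_succ_iff.mp hh)
          simpa [hG] using this
    rw [h3]
    have h4 : f ∈ (Fintype.piFinset (fun v => if b0 ≤ a v then Finset.Icc 0 k else Finset.Icc 1 k)) ↔
       (∀ v, f v ≤ k) ∧ ∀ v, toLex (0, b0) ≤ toLex (f v, a v) := by
      rw [Fintype.mem_piFinset, ← forall_and]
      refine forall_congr' fun v => ?_
      rw [lex_le_iff]
      split_ifs <;> simp <;> omega
    rw [h4]
    constructor
    · rintro ⟨⟨h5, h6⟩, h7⟩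
      refine ⟨?_, rfl, h7, h6⟩
      refine Fin.cases ?_ (fun i => ?_) (Fin.last n)
      · simp
      · simpa using h5 _
    · rintro ⟨h5, -, h7, h6⟩
      refine ⟨⟨fun v => ?_, h6⟩, h7⟩
      have hm : Monotone (Fin.cons 0 (f ∘ σ) : Fin (n+1) → ℕ) := 
        chains_mono (h2.mpr (h3.mpr ⟨h7, h6⟩))
      have := hm (Fin.le_last (σ.symm v).succ)
      simp only [Fin.cons_succ, Function.comp, Equiv.apply_symm_apply] at this
      omega
  refine Finset.card_nbij' (fun f => Fin.cons 0 (f ∘ σ)) (fun c => Fin.tail c ∘ σ.symm) ?_ ?_ ?_ ?_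
  · intro f hf
    exact (key f).mp hf
  · intro c hc
    refine (key _).mpr ?_
    have : (Fin.cons 0 ((Fin.tail c ∘ σ.symm) ∘ σ) : Fin (n+1) → ℕ) = c := by
      have h0 : c 0 = 0 := (mem_chains.mp hc).2.1
      rw [Function.comp_assoc, Equiv.symm_comp_self, Function.comp_id, ← h0, Fin.cons_self_tail]
    rw [this]; exact hc
  · intro f hf
    funext v
    simp [Fin.tail]
  · intro c hc
    have h0 : c 0 = 0 := (mem_chains.mp hc).2.1
    show (Fin.cons 0 ((Fin.tail c ∘ σ.symm) ∘ σ) : Fin (n+1) → ℕ) = c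
    rw [Function.comp_assoc, Equiv.symm_comp_self, Function.comp_id, ← h0, Fin.cons_self_tail]

theorem worp {n : ℕ} (a : Fin n → ℤ) (ha : Function.Injective a) (b0 : ℤ) (k : ℕ) :
    ∏ v, ((k : ℚ) + if b0 ≤ a v then 1 else 0) =
      ∑ σ : Equiv.Perm (Fin n), ((chains n (Fin.cons b0 (a ∘ σ)) k).card : ℚ) := by
  have h := Finset.card_eq_sum_card_fiberwise
    (s := Fintype.piFinset (fun v => if b0 ≤ a v then Finset.Icc 0 k else Finset.Icc 1 k))
    (f := fun f => Tuple.sort (fun v => toLex (f v, a v))) (t := Finset.univ) (by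
      intro _ _; simp)
  simp only [fiber_card a ha] at h
  rw [Fintype.card_piFinset] at h
  rw [← Nat.cast_sum, ← h, Nat.cast_prod]
  refine Finset.prod_congr rfl fun v _ => ?_
  split_ifs <;> simp

open PowerSeries in
theorem main_gf {n : ℕ} (a : Fin n → ℤ) (ha : Function.Injective a) (b0 : ℤ) :
    ∑ σ : Equiv.Perm (Fin n), (X : PowerSeries ℚ) ^ desN (Fin.cons b0 (a ∘ σ) : Fin (n+1) → ℤ) =
    (1 - X) ^ (n+1) * PowerSeries.mk (fun k => ∏ v, ((k : ℚ) + if b0 ≤ a v then 1 else 0)) := by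
  simp only [← chains_gf, ← Finset.mul_sum, worp a ha b0]
  congr 1
  ext k
  simp [map_sum]

/-- letters -/
def lett {n : ℕ} (p : SignedPerm n) (i : Fin n) : ℤ :=
  (if p.2 i then -1 else 1) * ((p.1 i : ℕ) + 1)

theorem word_eq {n : ℕ} (p : SignedPerm n) (i : Fin n) : p.word (i + 1) = lett p i := by
  unfold SignedPerm.word lett
  have : 1 ≤ (i:ℕ) + 1 ∧ (i:ℕ) + 1 ≤ n := by omega
  rw [dif_pos this]
  rfl

/-- tail descents -/
def tdes {m : ℕ} (w : Fin (m+2) → ℤ) : ℕ :=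
  ∑ i : Fin m, if w i.succ.succ < w i.castSucc.succ then 1 else 0

theorem desN_cons {m : ℕ} (w : Fin (m+2) → ℤ) (b0 : ℤ) :
    desN (Fin.cons b0 w : Fin (m+3) → ℤ) =
      (if w 0 < b0 then 1 else 0) + ((if w 1 < w 0 then 1 else 0) + tdes w) := by
  unfold desN tdes
  rw [Fin.sum_univ_succ, Fin.sum_univ_succ]
  rfl

theorem entry_succ {n : ℕ} (p : SignedPerm n) (i : Fin n) : p.entry (i + 1) = lett p i := by
  rw [SignedPerm.entry, if_neg (by omega), word_eq]

theorem entry_zero {m : ℕ} (p : SignedPerm (m+2)) : p.entry 0 = - lett p 1 := by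
  rw [SignedPerm.entry, if_pos rfl]
  exact congrArg _ (word_eq p 1)

theorem d_eq {m : ℕ} (p : SignedPerm (m+2)) :
    p.d = (if lett p 0 < - lett p 1 then 1 else 0) +
      ((if lett p 1 < lett p 0 then 1 else 0) + tdes (lett p)) := by
  unfold SignedPerm.d SignedPerm.ddes tdes
  rw [Finset.card_filter, Finset.sum_range, Fin.sum_univ_succ, Fin.sum_univ_succ]
  refine congrArg₂ _ ?_ (congrArg₂ _ ?_ ?_)
  · rw [← entry_zero, ← entry_succ]; rfl
  · rw [← entry_succ, ← entry_succ]; rfl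
  · refine Finset.sum_congr rfl fun i _ => ?_
    rw [← entry_succ, ← entry_succ]; rfl

theorem mem0 {m : ℕ} (p : SignedPerm (m+2)) : 0 ∈ p.ddes ↔ lett p 0 < - lett p 1 := by
  unfold SignedPerm.ddes
  rw [Finset.mem_filter, ← entry_zero, ← entry_succ]
  simp

theorem mem1 {m : ℕ} (p : SignedPerm (m+2)) : 1 ∈ p.ddes ↔ lett p 1 < lett p 0 := by
  unfold SignedPerm.ddes
  rw [Finset.mem_filter, ← entry_succ, ← entry_succ]
  simp

/-- sflip the sign at position i -/
def sflip {n : ℕ} (p : SignedPerm n) (i : Fin n) : SignedPerm n :=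
  (p.1, Function.update p.2 i (!p.2 i))

theorem lett_flip_self {n : ℕ} (p : SignedPerm n) (i : Fin n) : lett (sflip p i) i = - lett p i := by
  unfold lett sflip
  cases h : p.2 i <;> simp

theorem lett_flip_ne {n : ℕ} (p : SignedPerm n) (i j : Fin n) (h : j ≠ i) :
    lett (sflip p i) j = lett p j := by
  unfold lett sflip
  simp [h]

theorem sflip_sflip {n : ℕ} (p : SignedPerm n) (i : Fin n) : sflip (sflip p i) i = p := by
  unfold sflip
  simp

theorem inD_flip {n : ℕ} (p : SignedPerm n) (i : Fin n) : (sflip p i).inD ↔ ¬ p.inD := by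
  unfold SignedPerm.inD sflip
  have h : ∀ f : Fin n → Bool, (Finset.univ.filter (fun j => f j = true)).card =
      (if f i = true then 1 else 0) +
        ((Finset.univ.erase i).filter (fun j => f j = true)).card := by
    intro f
    rw [Finset.card_filter, Finset.card_filter]
    exact (Finset.add_sum_erase _ (fun j => if f j = true then 1 else 0) (Finset.mem_univ i)).symm
  rw [h, h p.2]
  have h2 : ((Finset.univ.erase i).filter
      (fun j => Function.update p.2 i (!p.2 i) j = true)) =
      ((Finset.univ.erase i).filter (fun j => p.2 j = true)) := by
    refine Finset.filter_congr fun j hj => ?_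
    rw [Function.update_of_ne (Finset.ne_of_mem_erase hj)]
  simp only [h2]
  cases h3 : p.2 i <;> simp [parity_simps]

theorem abs_lett {n : ℕ} (p : SignedPerm n) (i : Fin n) : |lett p i| = (p.1 i : ℕ) + 1 := by
  unfold lett
  split_ifs
  · rw [neg_one_mul, abs_neg, abs_of_nonneg (by positivity)]
  · rw [one_mul, abs_of_nonneg (by positivity)]

theorem abs_lett_ne {n : ℕ} (p : SignedPerm n) {i j : Fin n} (h : i ≠ j) :
    |lett p i| ≠ |lett p j| := by
  rw [abs_lett, abs_lett]
  intro h2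
  exact h (p.1.injective (Fin.ext (by omega)))

theorem lett_ne_zero {n : ℕ} (p : SignedPerm n) (i : Fin n) : lett p i ≠ 0 := by
  intro h
  have := abs_lett p i
  rw [h] at this
  simp at this
  omega

/-- sflip the sign of the letter ±1 -/
def flip1 {m : ℕ} (p : SignedPerm (m+2)) : SignedPerm (m+2) := sflip p (p.1.symm 0)

theorem flip1_flip1 {m : ℕ} (p : SignedPerm (m+2)) : flip1 (flip1 p) = p :=
  sflip_sflip p (p.1.symm 0)

theorem lett_flip1 {m : ℕ} (p : SignedPerm (m+2)) (i : Fin (m+2)) :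
    lett (flip1 p) i = lett p i ∨ (|lett p i| = 1 ∧ lett (flip1 p) i = - lett p i) := by
  by_cases h : i = p.1.symm 0
  · right
    subst h
    refine ⟨?_, lett_flip_self _ _⟩
    rw [abs_lett]; simp
  · left
    exact lett_flip_ne _ _ _ h

theorem flip1_lt {m : ℕ} (p : SignedPerm (m+2)) {i j : Fin (m+2)} (h : i ≠ j) :
    (lett (flip1 p) i < lett (flip1 p) j ↔ lett p i < lett p j) ∧
    (lett (flip1 p) i < - lett (flip1 p) j ↔ lett p i < - lett p j) := by
  have h1 := abs_lett_ne p h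
  have h2 := lett_ne_zero p i
  have h3 := lett_ne_zero p j
  have h4 := lett_flip1 p i
  have h5 := lett_flip1 p j
  generalize lett (flip1 p) i = x' at *
  generalize lett (flip1 p) j = y' at *
  generalize lett p i = x at *
  generalize lett p j = y at *
  rw [Ne, abs_eq_abs] at h1
  rw [abs_eq (by norm_num)] at h4 h5
  clear h
  omega

theorem tdes_flip1 {m : ℕ} (p : SignedPerm (m+2)) : tdes (lett (flip1 p)) = tdes (lett p) := by
  unfold tdes
  refine Finset.sum_congr rfl fun i _ => ?_
  have hne : i.succ.succ ≠ i.castSucc.succ := by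
    intro h; have := congrArg Fin.val h; simp at this
  simp only [(flip1_lt p hne).1]

theorem d_flip1 {m : ℕ} (p : SignedPerm (m+2)) : (flip1 p).d = p.d := by
  rw [d_eq, d_eq, tdes_flip1]
  simp only [(flip1_lt p (show (1 : Fin (m+2)) ≠ 0 by simp)).1,
    (flip1_lt p (show (0 : Fin (m+2)) ≠ 1 by simp)).2]

theorem type1_flip1 {m : ℕ} (p : SignedPerm (m+2)) : (flip1 p).type1 ↔ p.type1 := by
  unfold SignedPerm.type1
  rw [mem0, mem1, mem0, mem1, (flip1_lt p (show (1 : Fin (m+2)) ≠ 0 by simp)).1,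
    (flip1_lt p (show (0 : Fin (m+2)) ≠ 1 by simp)).2]

theorem type0_flip1 {m : ℕ} (p : SignedPerm (m+2)) : (flip1 p).type0Ge2 ↔ p.type0Ge2 := by
  unfold SignedPerm.type0Ge2
  rw [mem0, mem1, mem0, mem1, (flip1_lt p (show (1 : Fin (m+2)) ≠ 0 by simp)).1,
    (flip1_lt p (show (0 : Fin (m+2)) ≠ 1 by simp)).2]

theorem tdes_flip0 {m : ℕ} (p : SignedPerm (m+2)) : tdes (lett (sflip p 0)) = tdes (lett p) := by
  unfold tdes
  refine Finset.sum_congr rfl fun i _ => ?_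
  rw [lett_flip_ne _ _ _ (Fin.succ_ne_zero _), lett_flip_ne _ _ _ (Fin.succ_ne_zero _)]

theorem lett_flip0_0 {m : ℕ} (p : SignedPerm (m+2)) : lett (sflip p 0) 0 = - lett p 0 :=
  lett_flip_self _ _
theorem lett_flip0_1 {m : ℕ} (p : SignedPerm (m+2)) : lett (sflip p 0) 1 = lett p 1 :=
  lett_flip_ne _ _ _ (by simp)

theorem d_flip0 {m : ℕ} (p : SignedPerm (m+2)) : (sflip p 0).d = p.d := by
  rw [d_eq, d_eq, tdes_flip0, lett_flip0_0, lett_flip0_1]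
  split_ifs <;> omega

theorem type1_flip0 {m : ℕ} (p : SignedPerm (m+2)) : (sflip p 0).type1 ↔ p.type0Ge2 := by
  unfold SignedPerm.type1 SignedPerm.type0Ge2
  rw [mem0, mem1, mem0, mem1, lett_flip0_0, lett_flip0_1]
  omega

/-- involutions -/
def flip0E (m : ℕ) : SignedPerm (m+2) ≃ SignedPerm (m+2) :=
  ⟨fun p => sflip p 0, fun p => sflip p 0, fun p => sflip_sflip p 0, fun p => sflip_sflip p 0⟩

def flip1E (m : ℕ) : SignedPerm (m+2) ≃ SignedPerm (m+2) :=
  ⟨flip1, flip1, flip1_flip1, flip1_flip1⟩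

theorem inD_flip1 {m : ℕ} (p : SignedPerm (m+2)) : (flip1 p).inD ↔ ¬ p.inD := inD_flip _ _

open PowerSeries in
theorem two_D1 (m : ℕ) : 2 * ((polyD1 (m+2) : Polynomial ℚ) : PowerSeries ℚ) =
    ∑ p : SignedPerm (m+2), if p.type1 then X ^ p.d else 0 := by
  have h1 : ((polyD1 (m+2) : Polynomial ℚ) : PowerSeries ℚ) =
      ∑ p : SignedPerm (m+2), if p.inD ∧ p.type1 then X ^ p.d else 0 := by
    unfold polyD1
    rw [← Polynomial.coeToPowerSeries.ringHom_apply, map_sum, Finset.sum_filter]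
    simp
  have h2 : ((polyD1 (m+2) : Polynomial ℚ) : PowerSeries ℚ) =
      ∑ p : SignedPerm (m+2), if ¬ p.inD ∧ p.type1 then X ^ p.d else 0 := by
    rw [h1, ← Equiv.sum_comp (flip1E m)]
    refine Finset.sum_congr rfl fun p _ => ?_
    change (if (flip1 p).inD ∧ (flip1 p).type1 then (X : PowerSeries ℚ) ^ (flip1 p).d else 0) = _
    simp only [inD_flip1, type1_flip1, d_flip1]
  rw [two_mul]
  nth_rewrite 1 [h1]
  rw [h2, ← Finset.sum_add_distrib]
  refine Finset.sum_congr rfl fun p _ => ?_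
  by_cases hD : p.inD <;> by_cases ht : p.type1 <;> simp [hD, ht]

open PowerSeries in
theorem D0_eq_D1 (m : ℕ) : ((polyD0Ge2 (m+2) : Polynomial ℚ) : PowerSeries ℚ) = 
    ((polyD1 (m+2) : Polynomial ℚ) : PowerSeries ℚ) := by
  have h1 : ((polyD1 (m+2) : Polynomial ℚ) : PowerSeries ℚ) =
      ∑ p : SignedPerm (m+2), if p.inD ∧ p.type1 then X ^ p.d else 0 := by
    unfold polyD1
    rw [← Polynomial.coeToPowerSeries.ringHom_apply, map_sum, Finset.sum_filter]
    simp
  have h2 : ((polyD0Ge2 (m+2) : Polynomial ℚ) : PowerSeries ℚ) =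
      ∑ p : SignedPerm (m+2), if p.inD ∧ p.type0Ge2 then X ^ p.d else 0 := by
    unfold polyD0Ge2
    rw [← Polynomial.coeToPowerSeries.ringHom_apply, map_sum, Finset.sum_filter]
    simp
  rw [h1, h2, ← Equiv.sum_comp (flip1E m), ← Equiv.sum_comp (flip0E m) (fun p => if p.inD ∧ p.type1 then X ^ p.d else 0)]
  refine Finset.sum_congr rfl fun p _ => ?_
  change (if (flip1 p).inD ∧ (flip1 p).type0Ge2 then (X : PowerSeries ℚ) ^ (flip1 p).d else 0) = 
    (if (sflip p 0).inD ∧ (sflip p 0).type1 then (X : PowerSeries ℚ) ^ (sflip p 0).d else 0)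
  simp only [inD_flip1, type0_flip1, d_flip1, inD_flip, type1_flip0, d_flip0]

open PowerSeries in
theorem S0_eq_S1 (m : ℕ) : (∑ p : SignedPerm (m+2), if p.type0Ge2 then (X : PowerSeries ℚ) ^ p.d else 0) =
    ∑ p : SignedPerm (m+2), if p.type1 then (X : PowerSeries ℚ) ^ p.d else 0 := by
  rw [← Equiv.sum_comp (flip0E m) (fun p => if p.type1 then X ^ p.d else 0)]
  refine Finset.sum_congr rfl fun p _ => ?_
  change _ = (if (sflip p 0).type1 then (X : PowerSeries ℚ) ^ (sflip p 0).d else 0)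
  simp only [type1_flip0, d_flip0]

/-- type B and type A generating functions -/
noncomputable def gB (n : ℕ) (b0 : ℤ) : PowerSeries ℚ :=
  ∑ p : SignedPerm n, PowerSeries.X ^ desN (Fin.cons b0 (lett p) : Fin (n+1) → ℤ)

/-- signed values -/
def sval {n : ℕ} (s : Fin n → Bool) (v : Fin n) : ℤ := (if s v then -1 else 1) * ((v : ℕ) + 1)

theorem sval_inj {n : ℕ} (s : Fin n → Bool) : Function.Injective (sval s) := by
  intro v w h
  unfold sval at h
  apply Fin.ext
  split_ifs at h <;> omega

open PowerSeries in
theorem gB_eq (n : ℕ) (b0 : ℤ) : gB n b0 = (1 - X) ^ (n+1) *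
    PowerSeries.mk (fun k => ∑ s : Fin n → Bool, ∏ v, ((k : ℚ) + if b0 ≤ sval s v then 1 else 0)) := by
  have h : gB n b0 = ∑ s : Fin n → Bool, ∑ σ : Equiv.Perm (Fin n),
      (X : PowerSeries ℚ) ^ desN (Fin.cons b0 (sval s ∘ σ) : Fin (n+1) → ℤ) := by
    unfold gB
    rw [Fintype.sum_prod_type, Finset.sum_comm' (t' := Finset.univ) (s' := fun _ => Finset.univ) (by simp)]
    rw [Finset.sum_comm, Finset.sum_comm (s := (Finset.univ : Finset (Fin n → Bool)))]
    refine Finset.sum_congr rfl fun σ _ => ?_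
    rw [← Equiv.sum_comp (Equiv.arrowCongr σ.symm (Equiv.refl Bool))]
    refine Finset.sum_congr rfl fun s _ => ?_
    congr 2
  rw [h]
  simp only [main_gf _ (sval_inj _), ← Finset.mul_sum]
  congr 1
  ext k
  simp [map_sum]

open PowerSeries in
theorem gB_zero (n : ℕ) : gB n 0 = (1 - X) ^ (n+1) *
    PowerSeries.mk (fun k => (2 * (k : ℚ) + 1) ^ n) := by
  rw [gB_eq]
  congr 2
  funext k
  have h : ∀ (s : Fin n → Bool) v, ((k : ℚ) + if 0 ≤ sval s v then 1 else 0) =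
      (fun b : Bool => (k : ℚ) + if b then 0 else 1) (s v) := by
    intro s v
    unfold sval
    cases s v
    · simp; positivity
    · simp; omega
  simp only [h]
  rw [← Fintype.prod_sum (fun (_ : Fin n) (b : Bool) => (k : ℚ) + if b then 0 else 1)]
  simp
  congr 1
  ring

open PowerSeries in
theorem gB_neg (n : ℕ) : gB n (-(n : ℤ) - 1) = (1 - X) ^ (n+1) *
    PowerSeries.mk (fun k => 2 ^ n * ((k : ℚ) + 1) ^ n) := by
  rw [gB_eq]
  congr 2
  funext k
  have h : ∀ (s : Fin n → Bool) v, -(n : ℤ) - 1 ≤ sval s v := by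
    intro s v
    unfold sval
    split_ifs <;> omega
  simp [h]

open PowerSeries in
theorem pair_id (x y : ℤ) (R : ℕ) (N : ℤ) (hx : x ≠ 0) (hy : y ≠ 0) (hxy : |x| ≠ |y|)
    (h1 : N < x) (h2 : N < -x) (s s' q q' : PowerSeries ℚ) 
    (hs : s = (if (y < x ∧ ¬ x < -y) ∨ (x < -y ∧ ¬ y < x) then 
       X ^ ((if x < -y then 1 else 0) + ((if y < x then 1 else 0) + R)) else 0))
    (hs' : s' = (if (y < -x ∧ ¬ -x < -y) ∨ (-x < -y ∧ ¬ y < -x) then 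
       X ^ ((if -x < -y then 1 else 0) + ((if y < -x then 1 else 0) + R)) else 0))
    (hq : q = (1 + X) * X ^ ((if x < N then 1 else 0) + ((if y < x then 1 else 0) + R))
        - 2 * X ^ ((if x < 0 then 1 else 0) + ((if y < x then 1 else 0) + R)))
    (hq' : q' = (1 + X) * X ^ ((if -x < N then 1 else 0) + ((if y < -x then 1 else 0) + R))
        - 2 * X ^ ((if -x < 0 then 1 else 0) + ((if y < -x then 1 else 0) + R))) :
    2 * X * (q + q') = (1 - X) ^ 2 * (s + s') := by
  rw [if_neg (by omega)] at hq hq'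
  subst hs hs' hq hq'
  by_cases c1 : y < x <;> by_cases c2 : x < -y <;> by_cases c3 : x < 0 <;>
    by_cases c4 : y < -x <;> by_cases c5 : -x < -y <;> by_cases c6 : -x < 0 <;>
    first
    | (exfalso; omega)
    | (simp only [c1, c2, c3, c4, c5, c6, if_true, if_false, not_true, not_false_iff, and_true,
        and_false, or_true, or_false, true_and, false_and, false_or]; ring)

open PowerSeries in
theorem key_rel (m : ℕ) : 2 * X * ((1 + X) * gB (m+2) (-((m+2 : ℕ) : ℤ) - 1) - 2 * gB (m+2) 0) =
    (1 - X) ^ 2 * (4 * ((polyD1 (m+2) : Polynomial ℚ) : PowerSeries ℚ)) := by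
  set N : ℤ := -((m+2 : ℕ) : ℤ) - 1 with hN
  set q : SignedPerm (m+2) → PowerSeries ℚ := fun p =>
    (1 + X) * X ^ desN (Fin.cons N (lett p) : Fin (m+3) → ℤ) -
      2 * X ^ desN (Fin.cons 0 (lett p) : Fin (m+3) → ℤ) with hq
  set s : SignedPerm (m+2) → PowerSeries ℚ := fun p =>
    if (lett p 1 < lett p 0 ∧ ¬ lett p 0 < - lett p 1) ∨
      (lett p 0 < - lett p 1 ∧ ¬ lett p 1 < lett p 0) then X ^ p.d else 0 with hs
  have h1 : (1 + X) * gB (m+2) N - 2 * gB (m+2) 0 = ∑ p, q p := by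
    unfold gB
    rw [Finset.mul_sum, Finset.mul_sum, ← Finset.sum_sub_distrib]
  have h2 : 4 * ((polyD1 (m+2) : Polynomial ℚ) : PowerSeries ℚ) = ∑ p, s p := by
    have : 4 * ((polyD1 (m+2) : Polynomial ℚ) : PowerSeries ℚ) =
      2 * ((polyD1 (m+2) : Polynomial ℚ) : PowerSeries ℚ) +
      2 * ((polyD1 (m+2) : Polynomial ℚ) : PowerSeries ℚ) := by ring
    rw [this]
    rw [two_D1]
    nth_rewrite 2 [← S0_eq_S1]
    rw [← Finset.sum_add_distrib]
    refine Finset.sum_congr rfl fun p _ => ?_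
    simp only [hs, SignedPerm.type1, SignedPerm.type0Ge2, mem0, mem1]
    by_cases c1 : lett p 1 < lett p 0 <;> by_cases c2 : lett p 0 < - lett p 1 <;> simp [c1, c2]
  have h3 : ∀ p, 2 * X * (q p + q (sflip p 0)) = (1 - X) ^ 2 * (s p + s (sflip p 0)) := by
    intro p
    have hb := abs_lett p 0
    have hb1 := neg_abs_le (lett p 0)
    have hb2 := le_abs_self (lett p 0)
    have hlt := (p.1 0).isLt
    refine pair_id (lett p 0) (lett p 1) (tdes (lett p)) N (lett_ne_zero _ _) (lett_ne_zero _ _)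
      (abs_lett_ne p (by simp)) (by omega) (by omega) _ _ _ _ ?_ ?_ ?_ ?_
    · simp only [hs, d_eq]
    · simp only [hs, d_eq, lett_flip0_0, lett_flip0_1, tdes_flip0]
    · simp only [hq, desN_cons]
    · simp only [hq, desN_cons, lett_flip0_0, lett_flip0_1, tdes_flip0]
  have h4 : ∑ p, q (sflip p 0) = ∑ p, q p := Equiv.sum_comp (flip0E m) q
  have h5 : ∑ p, s (sflip p 0) = ∑ p, s p := Equiv.sum_comp (flip0E m) s
  have h6 := Finset.sum_congr (rfl : (Finset.univ : Finset (SignedPerm (m+2))) = _)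
    (fun p _ => h3 p)
  rw [← Finset.mul_sum, ← Finset.mul_sum, Finset.sum_add_distrib, Finset.sum_add_distrib,
    h4, h5] at h6
  rw [h1, h2]
  have h7 : (2 : PowerSeries ℚ) ≠ 0 := by
    intro h0
    have := congrArg constantCoeff h0
    rw [map_ofNat, map_zero] at this
    norm_num at this
  apply mul_left_cancel₀ h7
  linear_combination h6

open PowerSeries in
theorem D1_final (m : ℕ) : ((polyD1 (m+2) : Polynomial ℚ) : PowerSeries ℚ) =
      PowerSeries.X * (1 - PowerSeries.X) ^ (m + 1) *
        PowerSeries.mk (fun k => (2 : ℚ) ^ (m + 1) * (((k : ℚ) + 1) ^ (m+2) + (k : ℚ) ^ (m+2))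
          - (2 * (k : ℚ) + 1) ^ (m+2)) := by
  have h := key_rel m
  rw [gB_neg, gB_zero] at h
  have hm : (1 + X) * PowerSeries.mk (fun k => (2:ℚ) ^ (m+2) * ((k : ℚ) + 1) ^ (m+2)) -
      2 * PowerSeries.mk (fun k => (2 * (k : ℚ) + 1) ^ (m+2)) =
      2 * PowerSeries.mk (fun k => (2 : ℚ) ^ (m + 1) * (((k : ℚ) + 1) ^ (m+2) + (k : ℚ) ^ (m+2))
          - (2 * (k : ℚ) + 1) ^ (m+2)) := by
    have h2 : (2 : PowerSeries ℚ) = C 2 := (map_ofNat C 2).symm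
    rw [h2]
    ext k
    rw [add_mul, one_mul, map_sub, map_add, coeff_C_mul, coeff_C_mul, coeff_mk, coeff_mk, coeff_mk]
    cases k with
    | zero => simp; ring
    | succ k => rw [coeff_succ_X_mul, coeff_mk]; push_cast; ring
  have h7 : (4 * (1 - X) ^ 2 : PowerSeries ℚ) ≠ 0 := by
    intro h0
    have := congrArg constantCoeff h0
    rw [map_mul, map_ofNat, map_zero] at this
    simp at this
  apply mul_left_cancel₀ h7
  linear_combination -h + 2 * X * (1 - X) ^ (m+3) * hm

/-- **Corollary 4.5 (i).** In `ℚ⟦t⟧`: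
`D_n^{0,≥2}(t) = t(1-t)^{n-1}·Σ_{k≥0}(2^{n-1}((k+1)^n + k^n) - (2k+1)^n)t^k`,
and the same holds for `D_n^1(t)`. -/
theorem subEulerian_rational_gf (n : ℕ) (hn : 2 ≤ n) :
    ((polyD0Ge2 n : Polynomial ℚ) : PowerSeries ℚ) =
      PowerSeries.X * (1 - PowerSeries.X) ^ (n - 1) *
        PowerSeries.mk (fun k => (2 : ℚ) ^ (n - 1) * (((k : ℚ) + 1) ^ n + (k : ℚ) ^ n)
          - (2 * (k : ℚ) + 1) ^ n) ∧
    ((polyD1 n : Polynomial ℚ) : PowerSeries ℚ) =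
      PowerSeries.X * (1 - PowerSeries.X) ^ (n - 1) *
        PowerSeries.mk (fun k => (2 : ℚ) ^ (n - 1) * (((k : ℚ) + 1) ^ n + (k : ℚ) ^ n)
          - (2 * (k : ℚ) + 1) ^ n) := by
  obtain ⟨m, rfl⟩ : ∃ m, n = m + 2 := ⟨n - 2, by omega⟩
  have h := D1_final m
  exact ⟨(D0_eq_D1 m).trans h, h⟩
end
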